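/- Let Γ be a 3-homogeneous access structure on 7 players satisfying monotonicity, no-cloning and no-redundancy, and suppose ψ is a pure QSS state for Γ. Then every 2-element subset of {1,…,7} is contained in at least one set of Γ_min. -/

import Mathlib

open Finset

/-- Monotonicity of an access structure on `n` players (players = `Fin n`). -/
def Monotonic {n : ℕ} (Γ : Finset (Fin n) → Prop) : Prop :=
  ∀ A B : Finset (Fin n), Γ A → A ⊆ B → Γ B

/-- No-cloning: a set is authorized iff its complement is not. -/
def NoCloning {n : ℕ} (Γ : Finset (Fin n) → Prop) : Prop :=
  ∀ A : Finset (Fin n), Γ A ↔ ¬ Γ Aᶜ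

/-- `A` is a minimal authorized set of `Γ`. -/
def IsMinimal {n : ℕ} (Γ : Finset (Fin n) → Prop) (A : Finset (Fin n)) : Prop :=
  Γ A ∧ ∀ B : Finset (Fin n), B ⊂ A → ¬ Γ B

/-- No-redundancy: every player lies in some minimal authorized set. -/
def NoRedundancy {n : ℕ} (Γ : Finset (Fin n) → Prop) : Prop :=
  ∀ i : Fin n, ∃ A : Finset (Fin n), IsMinimal Γ A ∧ i ∈ A

noncomputable section

/-- Combine an assignment on `A` and one on `Aᶜ` into a full bit string. -/
def glue {m : ℕ} (A : Finset (Fin m)) (u : {x // x ∈ A} → Fin 2)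
    (w : {x // x ∈ Aᶜ} → Fin 2) : Fin m → Fin 2 :=
  fun x => if h : x ∈ A then u ⟨x, h⟩ else w ⟨x, Finset.mem_compl.mpr h⟩

/-- Reduced density matrix of the pure state `ψ` on the qubit positions in `A`:
the partial trace over the positions outside `A` of `ψψ†`. -/
def reducedDensity {m : ℕ} (ψ : (Fin m → Fin 2) → ℂ) (A : Finset (Fin m)) :
    Matrix ({x // x ∈ A} → Fin 2) ({x // x ∈ A} → Fin 2) ℂ :=
  fun u v => ∑ w : {x // x ∈ Aᶜ} → Fin 2,
    ψ (glue A u w) * (starRingEnd ℂ) (ψ (glue A v w))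

/-- The reduction of `ψ` to `A` is maximally mixed, i.e. equals `2^{-|A|} · I`. -/
def MaximallyMixed {m : ℕ} (ψ : (Fin m → Fin 2) → ℂ) (A : Finset (Fin m)) : Prop :=
  reducedDensity ψ A =
    ((2 : ℂ) ^ A.card)⁻¹ •
      (1 : Matrix ({x // x ∈ A} → Fin 2) ({x // x ∈ A} → Fin 2) ℂ)

open Classical in
/-- Von Neumann entropy (natural logarithm): sum of `-λ log λ` over the eigenvalues. -/
def vnEntropy {ι : Type} [Fintype ι] [DecidableEq ι] (ρ : Matrix ι ι ℂ) : ℝ :=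
  if h : ρ.IsHermitian then ∑ i, Real.negMulLog (h.eigenvalues i) else 0

/-- Entropy of the reduction of `ψ` to the set `A` of qubit positions. -/
def Sent {m : ℕ} (ψ : (Fin m → Fin 2) → ℂ) (A : Finset (Fin m)) : ℝ :=
  vnEntropy (reducedDensity ψ A)

/-- The qubit positions (in `{0,1,…,n} = Fin (n+1)`, where `0` is the reference qubit)
of a set of players `A ⊆ Fin n`: player `i` holds position `i.succ`. -/
def posOf {n : ℕ} (A : Finset (Fin n)) : Finset (Fin (n + 1)) := A.image Fin.succ

/-- `ψ` is a pure QSS state for the access structure `Γ`: a normalized pure state of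
`n+1` qubits (position `0` being the reference qubit `R`) satisfying Recoverability
`S(R) + S(A) - S(R ∪ A) = 2 log 2` for authorized `A` and Secrecy
`S(R) + S(B) - S(R ∪ B) = 0` for unauthorized `B`. -/
structure IsPureQSSState {n : ℕ} (Γ : Finset (Fin n) → Prop)
    (ψ : (Fin (n + 1) → Fin 2) → ℂ) : Prop where
  normalized : ∑ x : Fin (n + 1) → Fin 2, ‖ψ x‖ ^ 2 = 1
  recover : ∀ A : Finset (Fin n), Γ A →
    Sent ψ {0} + Sent ψ (posOf A) - Sent ψ (insert 0 (posOf A)) = 2 * Real.log 2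
  secrecy : ∀ B : Finset (Fin n), ¬ Γ B →
    Sent ψ {0} + Sent ψ (posOf B) - Sent ψ (insert 0 (posOf B)) = 0

end

set_option linter.all false
open scoped ComplexOrder

open Matrix Kronecker in
theorem vn_charpoly {ι : Type} [Fintype ι] [DecidableEq ι] (ρ : Matrix ι ι ℂ) (h : ρ.IsHermitian) :
    vnEntropy ρ = (ρ.charpoly.roots.map (fun z : ℂ => Real.negMulLog z.re)).sum := by
  rw [vnEntropy, dif_pos h, h.roots_charpoly_eq_eigenvalues, Multiset.map_map]
  rfl

open Matrix Kronecker in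
theorem vn_diag {ι : Type} [Fintype ι] [DecidableEq ι] (ρ U : Matrix ι ι ℂ) (p : ι → ℝ)
    (hU : Uᴴ * U = 1) (h : ρ = U * diagonal (fun i => (p i : ℂ)) * Uᴴ) :
    vnEntropy ρ = ∑ i, Real.negMulLog (p i) := by
  have hh : ρ.IsHermitian := by
    rw [h]
    apply Matrix.isHermitian_mul_mul_conjTranspose
    rw [Matrix.IsHermitian, diagonal_conjTranspose]
    congr 1
    ext i
    simp
  rw [vn_charpoly ρ hh, h, charpoly_mul_comm, ← mul_assoc, hU, one_mul, charpoly_diagonal,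
    Polynomial.roots_prod]
  · simp
  · simp [Finset.prod_ne_zero_iff, Polynomial.X_sub_C_ne_zero]

open Matrix Kronecker in
theorem exists_diag {ι : Type} [Fintype ι] [DecidableEq ι] (ρ : Matrix ι ι ℂ) (h : ρ.PosSemidef) :
    ∃ (U : Matrix ι ι ℂ) (p : ι → ℝ), Uᴴ * U = 1 ∧ U * Uᴴ = 1 ∧ (∀ i, 0 ≤ p i) ∧
      ρ = U * diagonal (fun i => (p i : ℂ)) * Uᴴ := by
  refine ⟨h.1.eigenvectorUnitary, h.1.eigenvalues, ?_, ?_, h.eigenvalues_nonneg, ?_⟩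
  · exact Unitary.coe_star_mul_self h.1.eigenvectorUnitary
  · exact Unitary.coe_mul_star_self h.1.eigenvectorUnitary
  · exact h.1.spectral_theorem

open Matrix Kronecker in
theorem vn_purity {ι κ : Type} [Fintype ι] [DecidableEq ι] [Fintype κ] [DecidableEq κ]
    (M : Matrix ι κ ℂ) : vnEntropy (M * Mᴴ) = vnEntropy ((Mᴴ * M)ᵀ) := by
  rw [vn_charpoly _ (Matrix.isHermitian_mul_conjTranspose_self M),
    vn_charpoly _ (Matrix.isHermitian_conjTranspose_mul_self M).transpose, charpoly_transpose]
  have h := congrArg (fun q : Polynomial ℂ => (q.roots.map (fun z : ℂ => Real.negMulLog z.re)).sum)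
    (charpoly_mul_comm' M Mᴴ)
  simpa [Polynomial.roots_mul, (charpoly_monic _).ne_zero, Multiset.map_nsmul, Multiset.sum_nsmul] using h

open Matrix Kronecker in
theorem vn_reindex {ι κ : Type} [Fintype ι] [DecidableEq ι] [Fintype κ] [DecidableEq κ]
    (ρ : Matrix ι ι ℂ) (h : ρ.IsHermitian) (e : κ ≃ ι) :
    vnEntropy (ρ.submatrix e e) = vnEntropy ρ := by
  rw [vn_charpoly _ h, vn_charpoly _ (h.submatrix e)]
  have := charpoly_reindex e.symm ρ
  simp only [reindex_apply, Equiv.symm_symm] at this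
  rw [this]

theorem scalar_klein (P p q : ℝ) (hP : 0 ≤ P) (hp : 0 ≤ p) (hq : 0 ≤ q) (h : q = 0 → P * p = 0) :
    0 ≤ P * (p * Real.log p - p * Real.log q - p + q) ∧
    (P * (p * Real.log p - p * Real.log q - p + q) = 0 → P * (p - q) = 0) := by
  rcases hP.eq_or_lt with rfl | hP
  · simp
  rcases hq.eq_or_lt with rfl | hq
  · have : p = 0 := by simpa [hP.ne'] using h rfl
    simp [this]
  rcases hp.eq_or_lt with rfl | hp
  · simp only [zero_mul, sub_zero, zero_sub, neg_zero, zero_add]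
    exact ⟨by positivity, fun h => by nlinarith⟩
  have e : p * Real.log p - p * Real.log q - p + q = p * (q / p - 1 - Real.log (q / p)) := by
    rw [Real.log_div hq.ne' hp.ne']; field_simp; ring
  rw [e]
  have hx : 0 < q / p := by positivity
  constructor
  · have := Real.log_le_sub_one_of_pos hx
    have : 0 ≤ q / p - 1 - Real.log (q / p) := by linarith
    positivity
  · intro h0
    by_cases hne : q / p = 1
    · have : q = p := by field_simp at hne; exact hne
      simp [this]
    · have := Real.log_lt_sub_one_of_pos hx hne
      have : 0 < q / p - 1 - Real.log (q / p) := by linarith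
      have : 0 < P * (p * (q / p - 1 - Real.log (q / p))) := by positivity
      linarith

/-- partial traces -/
def ptr1 {ι κ : Type} [Fintype κ] (ρ : Matrix (ι × κ) (ι × κ) ℂ) : Matrix ι ι ℂ :=
  fun i j => ∑ k, ρ (i, k) (j, k)

def ptr2 {ι κ : Type} [Fintype ι] (ρ : Matrix (ι × κ) (ι × κ) ℂ) : Matrix κ κ ℂ :=
  fun i j => ∑ k, ρ (k, i) (k, j)

open Matrix Kronecker in
theorem ptr1_trace {ι κ : Type} [Fintype ι] [Fintype κ] [DecidableEq κ]
    (ρ : Matrix (ι × κ) (ι × κ) ℂ) (X : Matrix ι ι ℂ) :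
    (ptr1 ρ * X).trace = (ρ * (X ⊗ₖ (1 : Matrix κ κ ℂ))).trace := by
  simp only [Matrix.trace, Matrix.diag, mul_apply, ptr1, kronecker_apply, Fintype.sum_prod_type, one_apply,
    mul_ite, mul_one, mul_zero, Finset.sum_ite_eq', Finset.mem_univ, if_true, Finset.sum_mul]
  refine Finset.sum_congr rfl fun i _ => ?_
  rw [Finset.sum_comm]

open Matrix Kronecker in
theorem ptr2_trace {ι κ : Type} [Fintype ι] [Fintype κ] [DecidableEq ι]
    (ρ : Matrix (ι × κ) (ι × κ) ℂ) (X : Matrix κ κ ℂ) :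
    (ptr2 ρ * X).trace = (ρ * ((1 : Matrix ι ι ℂ) ⊗ₖ X)).trace := by
  simp only [Matrix.trace, Matrix.diag, mul_apply, ptr2, kronecker_apply, Fintype.sum_prod_type, one_apply,
    ite_mul, one_mul, zero_mul, Finset.sum_mul]
  rw [Finset.sum_comm]
  simp only [mul_ite, mul_zero]
  rw [Finset.sum_comm]
  conv_rhs => rw [Finset.sum_comm]
  refine Finset.sum_congr rfl fun i _ => ?_
  rw [Finset.sum_comm]
  refine Finset.sum_congr rfl fun j _ => ?_
  rw [Finset.sum_comm]
  simp

open Matrix Kronecker in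
theorem diag_of_eq {ι : Type} [Fintype ι] [DecidableEq ι] (ρ U : Matrix ι ι ℂ) (p : ι → ℝ)
    (hU : Uᴴ * U = 1) (h : ρ = U * diagonal (fun i => (p i : ℂ)) * Uᴴ) (k : ι) :
    (ρ * (U * single k k 1 * Uᴴ)).trace = (p k : ℂ) := by
  have : ρ * (U * single k k 1 * Uᴴ) = U * (diagonal (fun i => (p i : ℂ)) * single k k 1 * Uᴴ) := by
    rw [h]
    simp only [mul_assoc]
    rw [← mul_assoc Uᴴ U, hU, one_mul]
  rw [this, trace_mul_comm, mul_assoc, hU, mul_one]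
  simp [Matrix.trace, diagonal_mul, single_apply, Matrix.diag]

theorem vn_le_log {ι : Type} [Fintype ι] [DecidableEq ι] (ρ : Matrix ι ι ℂ) (h : ρ.PosSemidef)
    (ht : ρ.trace = 1) : vnEntropy ρ ≤ Real.log (Fintype.card ι) := by
  have hne : Nonempty ι := by
    by_contra hne
    rw [not_nonempty_iff] at hne
    simp [Matrix.trace] at ht
  have hN : (0 : ℝ) < Fintype.card ι := by exact_mod_cast Fintype.card_pos
  rw [vnEntropy, dif_pos h.1]
  have hs : ∑ i, h.1.eigenvalues i = 1 := by
    have := h.1.trace_eq_sum_eigenvalues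
    rw [ht] at this
    apply Complex.ofReal_injective
    push_cast
    exact this.symm
  have key : ∀ i, Real.negMulLog (h.1.eigenvalues i) ≤
      (Fintype.card ι : ℝ)⁻¹ - h.1.eigenvalues i + h.1.eigenvalues i * Real.log (Fintype.card ι) := by
    intro i
    have := (scalar_klein 1 (h.1.eigenvalues i) (Fintype.card ι : ℝ)⁻¹ zero_le_one
      (h.eigenvalues_nonneg i) (by positivity) (by intro h0; simp [hN.ne'] at h0)).1
    rw [Real.log_inv] at this
    simp only [Real.negMulLog]
    linarith
  refine (Finset.sum_le_sum fun i _ => key i).trans (le_of_eq ?_)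
  rw [Finset.sum_add_distrib, Finset.sum_sub_distrib, ← Finset.sum_mul, hs]
  simp [hN.ne']

open Matrix Kronecker in
theorem kron_diag {ι κ : Type} [Fintype ι] [DecidableEq ι] [Fintype κ] [DecidableEq κ]
    (V : Matrix ι ι ℂ) (W : Matrix κ κ ℂ) (a : ι → ℝ) (b : κ → ℝ) :
    (V * diagonal (fun i => (a i : ℂ)) * Vᴴ) ⊗ₖ (W * diagonal (fun i => (b i : ℂ)) * Wᴴ) =
    (V ⊗ₖ W) * diagonal (fun x : ι × κ => ((a x.1 * b x.2 : ℝ) : ℂ)) * (V ⊗ₖ W)ᴴ := by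
  rw [mul_kronecker_mul, mul_kronecker_mul, diagonal_kronecker_diagonal, conjTranspose_kronecker]
  simp

open Matrix Kronecker in
theorem vn_kron {ι κ : Type} [Fintype ι] [DecidableEq ι] [Fintype κ] [DecidableEq κ]
    (ρ : Matrix ι ι ℂ) (σ : Matrix κ κ ℂ) (hρ : ρ.PosSemidef) (hσ : σ.PosSemidef)
    (tρ : ρ.trace = 1) (tσ : σ.trace = 1) :
    vnEntropy (ρ ⊗ₖ σ) = vnEntropy ρ + vnEntropy σ := by
  obtain ⟨V, a, hV, hV', ha, eρ⟩ := exists_diag ρ hρ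
  obtain ⟨W, b, hW, hW', hb, eσ⟩ := exists_diag σ hσ
  have hVW : (V ⊗ₖ W)ᴴ * (V ⊗ₖ W) = 1 := by
    rw [conjTranspose_kronecker, ← mul_kronecker_mul, hV, hW, one_kronecker_one]
  have sa : ∑ i, a i = 1 := by
    rw [eρ, trace_mul_comm, ← mul_assoc, hV, one_mul, trace_diagonal] at tρ
    exact_mod_cast tρ
  have sb : ∑ i, b i = 1 := by
    rw [eσ, trace_mul_comm, ← mul_assoc, hW, one_mul, trace_diagonal] at tσ
    exact_mod_cast tσ
  rw [vn_diag ρ V a hV eρ, vn_diag σ W b hW eσ,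
    vn_diag (ρ ⊗ₖ σ) (V ⊗ₖ W) (fun x => a x.1 * b x.2) hVW (by rw [← kron_diag, ← eρ, ← eσ]),
    Fintype.sum_prod_type]
  simp only [Real.negMulLog_mul, Finset.sum_add_distrib, ← Finset.sum_mul, ← Finset.mul_sum, sa, sb,
    one_mul]

open Matrix Kronecker in
theorem vn_subadd {ι κ : Type} [Fintype ι] [DecidableEq ι] [Fintype κ] [DecidableEq κ]
    (ρ : Matrix (ι × κ) (ι × κ) ℂ) (h : ρ.PosSemidef) (ht : ρ.trace = 1)
    (h1 : (ptr1 ρ).PosSemidef) (h2 : (ptr2 ρ).PosSemidef) :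
    vnEntropy ρ ≤ vnEntropy (ptr1 ρ) + vnEntropy (ptr2 ρ) ∧
    (vnEntropy ρ = vnEntropy (ptr1 ρ) + vnEntropy (ptr2 ρ) → ρ = ptr1 ρ ⊗ₖ ptr2 ρ) := by
  obtain ⟨U, p, hU, hU', hp, eρ⟩ := exists_diag ρ h
  obtain ⟨V, a, hV, hV', ha, e1⟩ := exists_diag (ptr1 ρ) h1
  obtain ⟨W, b, hW, hW', hb, e2⟩ := exists_diag (ptr2 ρ) h2
  set Z := V ⊗ₖ W with hZ
  have hZZ : Zᴴ * Z = 1 := by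
    rw [hZ, conjTranspose_kronecker, ← mul_kronecker_mul, hV, hW, one_kronecker_one]
  have hZZ' : Z * Zᴴ = 1 := by
    rw [hZ, conjTranspose_kronecker, ← mul_kronecker_mul, hV', hW', one_kronecker_one]
  set Q := Uᴴ * Z with hQ
  have hQQ : Qᴴ * Q = 1 := by
    rw [hQ, conjTranspose_mul, conjTranspose_conjTranspose, mul_assoc, ← mul_assoc U, hU', one_mul,
      hZZ]
  have hQQ' : Q * Qᴴ = 1 := by
    rw [hQ, conjTranspose_mul, conjTranspose_conjTranspose, mul_assoc, ← mul_assoc Z, hZZ', one_mul,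
      hU]
  set P : ι × κ → ι × κ → ℝ := fun i j => Complex.normSq (Q i j) with hP
  have P0 : ∀ i j, 0 ≤ P i j := fun i j => Complex.normSq_nonneg _
  have Pc : ∀ j, ∑ i, P i j = 1 := by
    intro j
    have := congrFun (congrFun hQQ j) j
    simp only [mul_apply, conjTranspose_apply, one_apply_eq] at this
    apply Complex.ofReal_injective
    rw [Complex.ofReal_one, ← this, Complex.ofReal_sum]
    refine Finset.sum_congr rfl fun i _ => ?_
    simp only [hP, Complex.normSq_eq_conj_mul_self]
    rfl
  have Pr : ∀ i, ∑ j, P i j = 1 := by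
    intro i
    have := congrFun (congrFun hQQ' i) i
    simp only [mul_apply, conjTranspose_apply, one_apply_eq] at this
    apply Complex.ofReal_injective
    rw [Complex.ofReal_one, ← this, Complex.ofReal_sum]
    refine Finset.sum_congr rfl fun j _ => ?_
    simp only [hP, ← Complex.mul_conj]
    rfl
  -- diagonal in the product basis
  set r : ι × κ → ℝ := fun j => ∑ i, P i j * p i with hr
  have r0 : ∀ j, 0 ≤ r j := fun j => Finset.sum_nonneg fun i _ => mul_nonneg (P0 i j) (hp i)
  have hrρ : ∀ j, (Zᴴ * ρ * Z) j j = (r j : ℂ) := by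
    intro j
    have : Zᴴ * ρ * Z = Qᴴ * diagonal (fun i => (p i : ℂ)) * Q := by
      rw [eρ, hQ, conjTranspose_mul, conjTranspose_conjTranspose]
      simp only [mul_assoc]
    rw [this, mul_apply, hr, Complex.ofReal_sum]
    refine Finset.sum_congr rfl fun i _ => ?_
    simp only [mul_diagonal, conjTranspose_apply, hP, Complex.ofReal_mul,
      Complex.normSq_eq_conj_mul_self]
    rw [mul_right_comm]
    rfl
  have ra : ∀ k, ∑ l, r (k, l) = a k := by
    intro k
    apply Complex.ofReal_injective
    have e := diag_of_eq _ V a hV e1 k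
    rw [ptr1_trace] at e
    have : (V * single k k (1 : ℂ) * Vᴴ) ⊗ₖ (1 : Matrix κ κ ℂ) =
        Z * ((single k k (1 : ℂ)) ⊗ₖ (1 : Matrix κ κ ℂ)) * Zᴴ := by
      rw [hZ, conjTranspose_kronecker, ← mul_kronecker_mul, ← mul_kronecker_mul, mul_one, hW']
    rw [this, ← mul_assoc, trace_mul_comm, ← mul_assoc, ← mul_assoc] at e
    rw [← e, Complex.ofReal_sum]
    simp only [Matrix.trace, Matrix.diag, mul_apply (M := Zᴴ * ρ * Z), Fintype.sum_prod_type,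
      kronecker_apply, one_apply, single_apply]
    rw [Finset.sum_eq_single k]
    · refine Finset.sum_congr rfl fun l _ => ?_
      rw [← hrρ]
      rw [Finset.sum_eq_single k, Finset.sum_eq_single l] <;> simp +contextual [eq_comm]
    · intro i _ hi
      simp [hi, hi.symm]
    · simp
  have rb : ∀ l, ∑ k, r (k, l) = b l := by
    intro l
    apply Complex.ofReal_injective
    have e := diag_of_eq _ W b hW e2 l
    rw [ptr2_trace] at e
    have : (1 : Matrix ι ι ℂ) ⊗ₖ (W * single l l (1 : ℂ) * Wᴴ)  =
        Z * ((1 : Matrix ι ι ℂ) ⊗ₖ (single l l (1 : ℂ))) * Zᴴ := by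
      rw [hZ, conjTranspose_kronecker, ← mul_kronecker_mul, ← mul_kronecker_mul, mul_one, hV']
    rw [this, ← mul_assoc, trace_mul_comm, ← mul_assoc, ← mul_assoc] at e
    rw [← e, Complex.ofReal_sum]
    simp only [Matrix.trace, Matrix.diag, mul_apply (M := Zᴴ * ρ * Z), Fintype.sum_prod_type,
      kronecker_apply, one_apply, single_apply]
    refine Finset.sum_congr rfl fun k _ => ?_
    rw [Finset.sum_eq_single l]
    · rw [← hrρ]
      rw [Finset.sum_eq_single k, Finset.sum_eq_single l] <;> simp +contextual [eq_comm]
    · intro i _ hi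
      simp [hi, hi.symm]
    · simp
  have sp : ∑ i, p i = 1 := by
    rw [eρ, trace_mul_comm, ← mul_assoc, hU, one_mul, trace_diagonal] at ht
    exact_mod_cast ht
  have sr : ∑ j, r j = 1 := by
    simp only [hr]
    rw [Finset.sum_comm]
    simp only [← Finset.sum_mul, Pr, one_mul, sp]
  have sa : ∑ k, a k = 1 := by
    rw [← sr, Fintype.sum_prod_type]; simp only [ra]
  have sb : ∑ k, b k = 1 := by
    rw [← sr, Fintype.sum_prod_type, Finset.sum_comm]; simp only [rb]
  have rz1 : ∀ k l, a k = 0 → r (k, l) = 0 := by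
    intro k l hk
    rw [← ra] at hk
    exact (Finset.sum_eq_zero_iff_of_nonneg fun l _ => r0 (k, l)).1 hk l (Finset.mem_univ _)
  have rz2 : ∀ k l, b l = 0 → r (k, l) = 0 := by
    intro k l hk
    rw [← rb] at hk
    exact (Finset.sum_eq_zero_iff_of_nonneg fun k _ => r0 (k, l)).1 hk k (Finset.mem_univ _)
  have Pz : ∀ i j, a j.1 * b j.2 = 0 → P i j * p i = 0 := by
    intro i j hj
    have : r j = 0 := by
      rcases mul_eq_zero.1 hj with h | h
      · exact rz1 _ _ h
      · exact rz2 _ _ h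
    exact (Finset.sum_eq_zero_iff_of_nonneg fun i _ => mul_nonneg (P0 i j) (hp i)).1 this i
      (Finset.mem_univ _)
  have K := fun i j => scalar_klein (P i j) (p i) (a j.1 * b j.2) (P0 i j) (hp i)
    (mul_nonneg (ha _) (hb _)) (Pz i j)
  have Ssum : ∑ i, ∑ j, P i j * (p i * Real.log (p i) - p i * Real.log (a j.1 * b j.2) - p i +
      a j.1 * b j.2) = vnEntropy (ptr1 ρ) + vnEntropy (ptr2 ρ) - vnEntropy ρ := by
    have t1 : ∑ i, ∑ j, P i j * (p i * Real.log (p i)) = - vnEntropy ρ := by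
      simp only [← Finset.sum_mul, Pr, one_mul]
      rw [vn_diag ρ U p hU eρ]
      simp [Real.negMulLog]
    have t3 : ∑ i, ∑ j, P i j * p i = 1 := by
      simp only [← Finset.sum_mul, Pr, one_mul, sp]
    have t4 : ∑ i, ∑ j, P i j * (a j.1 * b j.2) = 1 := by
      rw [Finset.sum_comm]
      simp only [← Finset.sum_mul, Pc, one_mul]
      rw [Fintype.sum_prod_type]
      simp only [← Finset.mul_sum, sb, mul_one, sa]
    have t2 : ∑ i, ∑ j, P i j * (p i * Real.log (a j.1 * b j.2)) =
        - (vnEntropy (ptr1 ρ) + vnEntropy (ptr2 ρ)) := by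
      rw [Finset.sum_comm]
      simp only [← mul_assoc, ← Finset.sum_mul]
      have : ∀ j, (∑ i, P i j * p i) * Real.log (a j.1 * b j.2) =
          r j * Real.log (a j.1) + r j * Real.log (b j.2) := by
        intro j
        change r j * _ = _
        by_cases h1 : a j.1 = 0
        · simp [show r j = 0 from rz1 _ _ h1]
        by_cases h2 : b j.2 = 0
        · simp [show r j = 0 from rz2 _ _ h2]
        rw [Real.log_mul h1 h2]; ring
      rw [Finset.sum_congr rfl fun j _ => this j, Finset.sum_add_distrib, Fintype.sum_prod_type,
        Fintype.sum_prod_type]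
      rw [Finset.sum_comm (f := fun x y => r (x, y) * Real.log (b y))]
      simp only [← Finset.sum_mul, ra, rb]
      rw [vn_diag _ V a hV e1, vn_diag _ W b hW e2]
      simp [Real.negMulLog]
      ring
    simp only [mul_add, mul_sub, Finset.sum_add_distrib, Finset.sum_sub_distrib, t1, t2, t3, t4]
    ring
  have nn : ∀ i, 0 ≤ ∑ j, P i j * (p i * Real.log (p i) - p i * Real.log (a j.1 * b j.2) - p i +
      a j.1 * b j.2) := fun i => Finset.sum_nonneg fun j _ => (K i j).1
  constructor
  · have := Finset.sum_nonneg fun i (_ : i ∈ Finset.univ) => nn i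
    rw [Ssum] at this
    linarith
  · intro heq
    rw [heq, sub_self, Finset.sum_eq_zero_iff_of_nonneg fun i _ => nn i] at Ssum
    have z : ∀ i j, P i j * (p i - a j.1 * b j.2) = 0 := fun i j =>
      (K i j).2 ((Finset.sum_eq_zero_iff_of_nonneg fun j _ => (K i j).1).1
        (Ssum i (Finset.mem_univ _)) j (Finset.mem_univ _))
    have hc : diagonal (fun i => (p i : ℂ)) * Q =
        Q * diagonal (fun x : ι × κ => ((a x.1 * b x.2 : ℝ) : ℂ)) := by
      ext i j
      rw [diagonal_mul, mul_diagonal]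
      rcases mul_eq_zero.1 (z i j) with h | h
      · rw [Complex.normSq_eq_zero.1 h]; simp
      · rw [sub_eq_zero.1 h]; ring
    have UQ : U * Q = Z := by rw [hQ, ← mul_assoc, hU', one_mul]
    have hU2 : Uᴴ = Q * Zᴴ := by rw [hQ, mul_assoc, hZZ', mul_one]
    calc ρ = U * diagonal (fun i => (p i : ℂ)) * (Q * Zᴴ) := by rw [← hU2]; exact eρ
      _ = U * (diagonal (fun i => (p i : ℂ)) * Q) * Zᴴ := by simp only [mul_assoc]
      _ = (U * Q) * diagonal (fun x : ι × κ => ((a x.1 * b x.2 : ℝ) : ℂ)) * Zᴴ := by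
        rw [hc]; simp only [mul_assoc]
      _ = _ := by rw [UQ, hZ, ← kron_diag, ← e1, ← e2]

/-- reduced density matrix with full strings as indices -/
def RR {m : ℕ} (ψ : (Fin m → Fin 2) → ℂ) (A : Finset (Fin m)) (x y : Fin m → Fin 2) : ℂ :=
  reducedDensity ψ A (fun i => x i) (fun i => y i)

def ovr {m : ℕ} (C : Finset (Fin m)) (x : Fin m → Fin 2) (c : {i // i ∈ C} → Fin 2) :
    Fin m → Fin 2 := fun i => if h : i ∈ C then c ⟨i, h⟩ else x i

theorem RR_ind {m : ℕ} (ψ : (Fin m → Fin 2) → ℂ) (A : Finset (Fin m)) (x y : Fin m → Fin 2) :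
    RR ψ A x y = ∑ z : (Fin m → Fin 2) × (Fin m → Fin 2),
      if ((∀ i ∈ A, z.1 i = x i) ∧ (∀ i ∈ A, z.2 i = y i) ∧ ∀ i, i ∉ A → z.1 i = z.2 i) then
        ψ z.1 * (starRingEnd ℂ) (ψ z.2) else 0 := by
  rw [← Finset.sum_filter, RR, reducedDensity]
  refine Finset.sum_bij' (fun w _ => (glue A (fun i => x i) w, glue A (fun i => y i) w))
    (fun z _ => fun i => z.1 i) ?_ ?_ ?_ ?_ ?_
  · intro w _
    simp +contextual [glue]
  · intro z _
    simp
  · intro w _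
    ext i
    have := Finset.mem_compl.1 i.2
    simp [glue, this]
  · rintro ⟨z1, z2⟩ hz
    simp only [Finset.mem_filter, Finset.mem_univ, true_and] at hz
    obtain ⟨h1, h2, h3⟩ := hz
    simp only [Prod.mk.injEq]
    constructor
    · funext i
      by_cases h : i ∈ A
      · simp [glue, h, h1 i h]
      · simp [glue, h]
    · funext i
      by_cases h : i ∈ A
      · simp [glue, h, h2 i h]
      · simp [glue, h, h3 i h]
  · intro w _
    rfl

theorem RR_congr {m : ℕ} (ψ : (Fin m → Fin 2) → ℂ) (A : Finset (Fin m)) {x y x' y' : Fin m → Fin 2}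
    (hx : ∀ i ∈ A, x i = x' i) (hy : ∀ i ∈ A, y i = y' i) : RR ψ A x y = RR ψ A x' y' := by
  unfold RR
  congr 1
  · funext i; exact hx i i.2
  · funext i; exact hy i i.2

theorem RR_ptr {m : ℕ} (ψ : (Fin m → Fin 2) → ℂ) (A C : Finset (Fin m)) (hd : Disjoint A C)
    (x y : Fin m → Fin 2) :
    RR ψ A x y = ∑ c : {i // i ∈ C} → Fin 2, RR ψ (A ∪ C) (ovr C x c) (ovr C y c) := by
  simp only [RR_ind]
  rw [Finset.sum_comm]
  refine Finset.sum_congr rfl fun z _ => ?_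
  have hAC : ∀ i ∈ A, i ∉ C := fun i h => Finset.disjoint_left.1 hd h
  have key : ∀ c : {i // i ∈ C} → Fin 2,
      ((∀ i ∈ A ∪ C, z.1 i = ovr C x c i) ∧ (∀ i ∈ A ∪ C, z.2 i = ovr C y c i) ∧
        ∀ i, i ∉ A ∪ C → z.1 i = z.2 i) ↔
      (c = (fun i : {i // i ∈ C} => z.1 i.1) ∧
      ((∀ i ∈ A, z.1 i = x i) ∧ (∀ i ∈ A, z.2 i = y i) ∧ ∀ i, i ∉ A → z.1 i = z.2 i)) := by
    intro c
    constructor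
    · rintro ⟨h1, h2, h3⟩
      have k1 : ∀ i (h : i ∈ C), z.1 i = c ⟨i, h⟩ := fun i h => by
        rw [h1 i (Finset.mem_union_right _ h), ovr, dif_pos h]
      have k2 : ∀ i (h : i ∈ C), z.2 i = c ⟨i, h⟩ := fun i h => by
        rw [h2 i (Finset.mem_union_right _ h), ovr, dif_pos h]
      refine ⟨funext fun i => (k1 i.1 i.2).symm, fun i h => ?_, fun i h => ?_, fun i h => ?_⟩
      · rw [h1 i (Finset.mem_union_left _ h), ovr, dif_neg (hAC i h)]
      · rw [h2 i (Finset.mem_union_left _ h), ovr, dif_neg (hAC i h)]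
      · by_cases hc : i ∈ C
        · rw [k1 i hc, k2 i hc]
        · exact h3 i (by simp [h, hc])
    · rintro ⟨rfl, h1, h2, h3⟩
      refine ⟨fun i h => ?_, fun i h => ?_, fun i h => ?_⟩
      · by_cases hc : i ∈ C
        · rw [ovr, dif_pos hc]
        · rw [ovr, dif_neg hc]; exact h1 i (by simpa [hc] using h)
      · by_cases hc : i ∈ C
        · rw [ovr, dif_pos hc]; exact (h3 i (fun h' => hAC i h' hc)).symm
        · rw [ovr, dif_neg hc]; exact h2 i (by simpa [hc] using h)
      · exact h3 i (fun h' => h (Finset.mem_union_left _ h'))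
  simp only [key]
  by_cases hz : ((∀ i ∈ A, z.1 i = x i) ∧ (∀ i ∈ A, z.2 i = y i) ∧ ∀ i, i ∉ A → z.1 i = z.2 i)
  · simp only [eq_true hz, and_true, if_true]
    rw [Finset.sum_ite_eq']
    simp
  · simp only [eq_false hz, and_false, if_false, Finset.sum_const_zero]

def ext0 {m : ℕ} (A : Finset (Fin m)) (u : {i // i ∈ A} → Fin 2) : Fin m → Fin 2 :=
  ovr A (fun _ => 0) u

theorem ext0_restr {m : ℕ} (A : Finset (Fin m)) (u : {i // i ∈ A} → Fin 2) :
    (fun i : {i // i ∈ A} => ext0 A u i) = u := by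
  funext i
  simp [ext0, ovr]

theorem rd_eq_RR {m : ℕ} (ψ : (Fin m → Fin 2) → ℂ) (A : Finset (Fin m))
    (u v : {i // i ∈ A} → Fin 2) :
    reducedDensity ψ A u v = RR ψ A (ext0 A u) (ext0 A v) := by
  rw [RR, ext0_restr, ext0_restr]

theorem rd_mul {m : ℕ} (ψ : (Fin m → Fin 2) → ℂ) (A : Finset (Fin m)) :
    ∃ M : Matrix ({x // x ∈ A} → Fin 2) ({x // x ∈ Aᶜ} → Fin 2) ℂ,
      M = (fun u w => ψ (glue A u w)) ∧ reducedDensity ψ A = M * M.conjTranspose := by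
  refine ⟨_, rfl, ?_⟩
  ext u v
  rfl

theorem rd_psd {m : ℕ} (ψ : (Fin m → Fin 2) → ℂ) (A : Finset (Fin m)) :
    (reducedDensity ψ A).PosSemidef := by
  obtain ⟨M, -, h⟩ := rd_mul ψ A
  rw [h]
  exact Matrix.posSemidef_self_mul_conjTranspose M

theorem rd_trace {m : ℕ} (ψ : (Fin m → Fin 2) → ℂ) (A : Finset (Fin m))
    (hn : ∑ x, ‖ψ x‖ ^ 2 = 1) : (reducedDensity ψ A).trace = 1 := by
  have h0 : (reducedDensity ψ A).trace = RR ψ ∅ (fun _ => 0) (fun _ => 0) := by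
    rw [RR_ptr ψ ∅ A (Finset.disjoint_empty_left _), Matrix.trace]
    refine Finset.sum_congr rfl fun u _ => ?_
    rw [Matrix.diag, rd_eq_RR, Finset.empty_union]
    rfl
  rw [h0, RR_ind]
  rw [Fintype.sum_prod_type]
  have key : ∀ x y : Fin m → Fin 2, ((∀ i ∈ (∅ : Finset (Fin m)), x i = 0) ∧
      (∀ i ∈ (∅ : Finset (Fin m)), y i = 0) ∧ ∀ i, i ∉ (∅ : Finset (Fin m)) → x i = y i) ↔ x = y := by
    intro x y
    simp [funext_iff]
  simp only [key]
  simp only [Finset.sum_ite_eq, Finset.mem_univ, if_true]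
  rw [← Complex.ofReal_one, ← hn, Complex.ofReal_sum]
  refine Finset.sum_congr rfl fun x _ => ?_
  rw [Complex.mul_conj, Complex.normSq_eq_norm_sq]

def eU {m : ℕ} (A B : Finset (Fin m)) (hd : Disjoint A B) :
    (({i // i ∈ A} → Fin 2) × ({i // i ∈ B} → Fin 2)) ≃ ({i // i ∈ A ∪ B} → Fin 2) where
  toFun p := fun i => ovr A (ext0 B p.2) p.1 i
  invFun f := (fun i => f ⟨i, Finset.mem_union_left _ i.2⟩, fun i => f ⟨i, Finset.mem_union_right _ i.2⟩)
  left_inv := by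
    rintro ⟨u, v⟩
    have : ∀ i ∈ B, i ∉ A := fun i h => Finset.disjoint_right.1 hd h
    ext i
    · simp [ovr]
    · simp [ovr, ext0, this i i.2]
  right_inv := by
    intro f
    funext i
    by_cases h : i.1 ∈ A
    · simp [ovr, h]
    · have : i.1 ∈ B := (Finset.mem_union.1 i.2).resolve_left h
      simp [ovr, ext0, h, this]

def rAB {m : ℕ} (ψ : (Fin m → Fin 2) → ℂ) (A B : Finset (Fin m)) (hd : Disjoint A B) :
    Matrix (({i // i ∈ A} → Fin 2) × ({i // i ∈ B} → Fin 2))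
      (({i // i ∈ A} → Fin 2) × ({i // i ∈ B} → Fin 2)) ℂ :=
  (reducedDensity ψ (A ∪ B)).submatrix (eU A B hd) (eU A B hd)

theorem rAB_apply {m : ℕ} (ψ : (Fin m → Fin 2) → ℂ) (A B : Finset (Fin m)) (hd : Disjoint A B)
    (p q) : rAB ψ A B hd p q = RR ψ (A ∪ B) (ovr A (ext0 B p.2) p.1) (ovr A (ext0 B q.2) q.1) := rfl

theorem rAB_ptr1 {m : ℕ} (ψ : (Fin m → Fin 2) → ℂ) (A B : Finset (Fin m)) (hd : Disjoint A B) :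
    ptr1 (rAB ψ A B hd) = reducedDensity ψ A := by
  ext u v
  rw [rd_eq_RR, RR_ptr ψ A B hd, ptr1]
  refine Finset.sum_congr rfl fun c _ => ?_
  rw [rAB_apply]
  have hh : ∀ i ∈ B, i ∉ A := fun i h => Finset.disjoint_right.1 hd h
  apply RR_congr <;> intro i _ <;> by_cases hA : i ∈ A <;> by_cases hB : i ∈ B <;>
    simp_all [ovr, ext0]

theorem rAB_ptr2 {m : ℕ} (ψ : (Fin m → Fin 2) → ℂ) (A B : Finset (Fin m)) (hd : Disjoint A B) :
    ptr2 (rAB ψ A B hd) = reducedDensity ψ B := by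
  ext u v
  rw [rd_eq_RR, RR_ptr ψ B A hd.symm, ptr2]
  refine Finset.sum_congr rfl fun c _ => ?_
  rw [rAB_apply, Finset.union_comm]

theorem vn_rAB {m : ℕ} (ψ : (Fin m → Fin 2) → ℂ) (A B : Finset (Fin m)) (hd : Disjoint A B) :
    vnEntropy (rAB ψ A B hd) = Sent ψ (A ∪ B) :=
  vn_reindex _ (rd_psd ψ _).1 _

theorem rAB_trace {m : ℕ} (ψ : (Fin m → Fin 2) → ℂ) (A B : Finset (Fin m)) (hd : Disjoint A B)
    (hn : ∑ x, ‖ψ x‖ ^ 2 = 1) : (rAB ψ A B hd).trace = 1 := by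
  rw [← rd_trace ψ (A ∪ B) hn]
  exact (eU A B hd).sum_comp (fun i => reducedDensity ψ (A ∪ B) i i)

theorem S_sub {m : ℕ} (ψ : (Fin m → Fin 2) → ℂ) (A B : Finset (Fin m)) (hd : Disjoint A B)
    (hn : ∑ x, ‖ψ x‖ ^ 2 = 1) : Sent ψ (A ∪ B) ≤ Sent ψ A + Sent ψ B := by
  have := (vn_subadd (rAB ψ A B hd) ((rd_psd ψ _).submatrix _) (rAB_trace ψ A B hd hn)
    (by rw [rAB_ptr1]; exact rd_psd ψ _) (by rw [rAB_ptr2]; exact rd_psd ψ _)).1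
  rwa [rAB_ptr1, rAB_ptr2, vn_rAB] at this

theorem S_prod {m : ℕ} (ψ : (Fin m → Fin 2) → ℂ) (A B : Finset (Fin m)) (hd : Disjoint A B)
    (hn : ∑ x, ‖ψ x‖ ^ 2 = 1) (h : Sent ψ (A ∪ B) = Sent ψ A + Sent ψ B) (x y : Fin m → Fin 2) :
    RR ψ (A ∪ B) x y = RR ψ A x y * RR ψ B x y := by
  have := (vn_subadd (rAB ψ A B hd) ((rd_psd ψ _).submatrix _) (rAB_trace ψ A B hd hn)
    (by rw [rAB_ptr1]; exact rd_psd ψ _) (by rw [rAB_ptr2]; exact rd_psd ψ _)).2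
  rw [rAB_ptr1, rAB_ptr2, vn_rAB] at this
  have := congrFun (congrFun (this h) ((fun i => x i), fun i => x i)) ((fun i => y i), fun i => y i)
  rw [rAB_apply, Matrix.kronecker_apply] at this
  change _ = RR ψ A x y * RR ψ B x y at this
  rw [← this]
  have hh : ∀ i ∈ B, i ∉ A := fun i h => Finset.disjoint_right.1 hd h
  apply RR_congr <;> intro i hi <;> by_cases hA : i ∈ A <;> by_cases hB : i ∈ B <;>
    simp_all [ovr, ext0]

theorem S_of_prod {m : ℕ} (ψ : (Fin m → Fin 2) → ℂ) (A B : Finset (Fin m)) (hd : Disjoint A B)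
    (hn : ∑ x, ‖ψ x‖ ^ 2 = 1) (h : ∀ x y, RR ψ (A ∪ B) x y = RR ψ A x y * RR ψ B x y) :
    Sent ψ (A ∪ B) = Sent ψ A + Sent ψ B := by
  rw [← vn_rAB ψ A B hd, Sent, Sent, ← vn_kron _ _ (rd_psd ψ A) (rd_psd ψ B) (rd_trace ψ A hn)
    (rd_trace ψ B hn)]
  congr 1
  ext p q
  rw [rAB_apply, h, Matrix.kronecker_apply, rd_eq_RR, rd_eq_RR]
  have hh : ∀ i ∈ B, i ∉ A := fun i h => Finset.disjoint_right.1 hd h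
  congr 1 <;> apply RR_congr <;> intro i hi <;> by_cases hA : i ∈ A <;> simp_all [ovr, ext0]

theorem S_mono_prod {m : ℕ} (ψ : (Fin m → Fin 2) → ℂ) (A B B' : Finset (Fin m)) (hd : Disjoint A B)
    (hs : B' ⊆ B)
    (hn : ∑ x, ‖ψ x‖ ^ 2 = 1) (h : Sent ψ (A ∪ B) = Sent ψ A + Sent ψ B) :
    Sent ψ (A ∪ B') = Sent ψ A + Sent ψ B' := by
  have hd' : Disjoint A B' := Finset.disjoint_of_subset_right hs hd
  have P := S_prod ψ A B hd hn h
  apply S_of_prod ψ A B' hd' hn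
  intro x y
  have hAC : Disjoint A (B \ B') := Finset.disjoint_of_subset_right Finset.sdiff_subset hd
  have hBC : Disjoint B' (B \ B') := Finset.disjoint_sdiff
  have eB : B' ∪ B \ B' = B := Finset.union_sdiff_of_subset hs
  rw [RR_ptr ψ (A ∪ B') (B \ B') (Finset.disjoint_union_left.2 ⟨hAC, hBC⟩),
    RR_ptr ψ B' (B \ B') hBC, Finset.mul_sum]
  refine Finset.sum_congr rfl fun c _ => ?_
  rw [Finset.union_assoc, eB, P]
  congr 1
  apply RR_congr <;> intro i hi <;> simp [ovr, Finset.disjoint_left.1 hAC hi]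

theorem S_compl {m : ℕ} (ψ : (Fin m → Fin 2) → ℂ) (A : Finset (Fin m)) :
    Sent ψ A = Sent ψ Aᶜ := by
  obtain ⟨M, hM, h⟩ := rd_mul ψ A
  rw [Sent, Sent, h, vn_purity]
  congr 1
  ext u v
  rw [rd_eq_RR, RR, ext0_restr, ext0_restr]
  simp only [Matrix.transpose_apply, Matrix.mul_apply, Matrix.conjTranspose_apply, reducedDensity, hM]
  refine Finset.sum_bij' (fun a _ => fun i => a ⟨i, by simpa using i.2⟩)
    (fun w _ => fun i => w ⟨i, by simp⟩) (by simp) (by simp) (by intros; rfl) (by intros; rfl) ?_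
  intro a _
  rw [mul_comm]
  have e : ∀ u : {x // x ∈ Aᶜ} → Fin 2, glue A a u =
      glue Aᶜ u (fun i => a ⟨i, by simpa using i.2⟩) := by
    intro u
    funext i
    by_cases hi : i ∈ A <;> simp [glue, hi]
  rw [← e, ← e]
  rfl

theorem S_single {m : ℕ} (ψ : (Fin m → Fin 2) → ℂ) (j : Fin m)
    (hn : ∑ x, ‖ψ x‖ ^ 2 = 1) : Sent ψ {j} ≤ Real.log 2 := by
  have := vn_le_log _ (rd_psd ψ {j}) (rd_trace ψ {j} hn)
  simpa [Sent] using this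

theorem map_compl_perm (σ : Equiv.Perm (Fin 7)) (A : Finset (Fin 7)) :
    (Aᶜ).map σ.toEmbedding = (A.map σ.toEmbedding)ᶜ := by
  ext x; simp [Finset.mem_map_equiv]

/-- The entropic facts used about a pure QSS state, for sets of players (`L = log 2`). -/
structure Ent (Γ : Finset (Fin 7) → Prop) (s : Finset (Fin 7) → ℝ) (L : ℝ) : Prop where
  pos : 0 < L
  single : ∀ j, s {j} ≤ L
  sub : ∀ A B, Disjoint A B → s (A ∪ B) ≤ s A + s B
  subR : ∀ A B, Disjoint A B → s (A ∪ B)ᶜ ≤ s A + s Bᶜ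
  prod : ∀ A B B', Disjoint A B → B' ⊆ B → s (A ∪ B) = s A + s B → s (A ∪ B') = s A + s B'
  prodR : ∀ A B B', Disjoint A B → B' ⊆ B → s (A ∪ B)ᶜ = s A + s Bᶜ → s (A ∪ B')ᶜ = s A + s B'ᶜ
  auth : ∀ A, Γ A → s univ + s A - s Aᶜ = 2 * L
  unauth : ∀ A, ¬ Γ A → s univ + s A - s Aᶜ = 0

theorem Ent.map {Γ s L} (h : Ent Γ s L) (σ : Equiv.Perm (Fin 7)) :
    Ent (fun A => Γ (A.map σ.toEmbedding)) (fun A => s (A.map σ.toEmbedding)) L where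
  pos := h.pos
  single j := by simpa using h.single (σ j)
  sub A B hd := by
    rw [Finset.map_union]; exact h.sub _ _ ((Finset.disjoint_map _).2 hd)
  subR A B hd := by
    rw [map_compl_perm, map_compl_perm, Finset.map_union]
    exact h.subR _ _ ((Finset.disjoint_map _).2 hd)
  prod A B B' hd hs := by
    rw [Finset.map_union, Finset.map_union]
    exact h.prod _ _ _ ((Finset.disjoint_map _).2 hd) (Finset.map_subset_map.2 hs)
  prodR A B B' hd hs := by
    simp only [map_compl_perm, Finset.map_union]
    exact h.prodR _ _ _ ((Finset.disjoint_map _).2 hd) (Finset.map_subset_map.2 hs)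
  auth A hA := by
    rw [map_compl_perm, Finset.map_univ_equiv]; exact h.auth _ hA
  unauth A hA := by
    rw [map_compl_perm, Finset.map_univ_equiv]; exact h.unauth _ hA

theorem Ent.R {Γ s L} (h : Ent Γ s L) (hnc : NoCloning Γ) : s univ = L := by
  by_cases hu : Γ univ
  · have h1 := h.auth univ hu
    have h2 := h.unauth univᶜ ((hnc _).1 hu)
    rw [compl_compl] at h2
    linarith
  · have h1 := h.unauth univ hu
    have h2 := h.auth univᶜ (by by_contra h'; exact hu ((hnc _).2 h'))
    rw [compl_compl] at h2
    linarith

theorem Ent.J {Γ s L} (h : Ent Γ s L) (hnc : NoCloning Γ) (A : Finset (Fin 7)) (j : Fin 7)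
    (hj : j ∉ A) (hA : ¬ Γ A) (hAj : Γ ({j} ∪ A)) :
    s {j} = L ∧ s ({j} ∪ A) = s {j} + s A := by
  have hd : Disjoint {j} A := Finset.disjoint_singleton_left.2 hj
  have hR := h.R hnc
  have h1 := h.unauth A hA
  have h2 := h.auth _ hAj
  have h3 := h.sub {j} A hd
  have h4 := h.single j
  have h5 := h.sub {j} ({j} ∪ A)ᶜ (Finset.disjoint_singleton_left.2 (by simp))
  have e : {j} ∪ ({j} ∪ A)ᶜ = Aᶜ := by
    ext i
    by_cases hi : i = j
    · subst hi; simp [hj]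
    · simp [hi]
  rw [e] at h5
  constructor <;> linarith

theorem no_bad {Γ s L} (h : Ent Γ s L) (hmono : Monotonic Γ) (hnc : NoCloning Γ)
    (h014 : Γ {0, 1, 4}) (h234 : Γ {2, 3, 4}) (h025 : Γ {0, 2, 5})
    (h036 : Γ {0, 3, 6}) (h126 : Γ {1, 2, 6}) (h123 : Γ {1, 2, 3}) (h023 : Γ {0, 2, 3})
    (hsmall : ∀ A : Finset (Fin 7), A.card < 3 → ¬ Γ A) : False := by
  have un : ∀ A B : Finset (Fin 7), Γ A → Disjoint A B → ¬ Γ B := fun A B hA hd hB =>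
    (hnc A).1 hA (hmono _ _ hB (Finset.subset_compl_iff_disjoint_left.2 hd))
  have hR := h.R hnc
  obtain ⟨j4, k4⟩ := h.J hnc {2, 3, 5, 6} 4 (by decide) (un _ _ h014 (by decide))
    (hmono _ _ h234 (by decide))
  obtain ⟨j6, k6⟩ := h.J hnc {0, 3, 5} 6 (by decide) (un _ _ h126 (by decide))
    (hmono _ _ h036 (by decide))
  obtain ⟨j5, k5⟩ := h.J hnc {0, 2} 5 (by decide) (hsmall _ (by decide))
    (hmono _ _ h025 (by decide))
  have m4 := h.prod {4} {2, 3, 5, 6} {6, 5} (by decide) (by decide) k4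
  have m6 := h.prod {6} {0, 3, 5} {5} (by decide) (by decide) k6
  rw [show ({6} ∪ {5} : Finset (Fin 7)) = {6, 5} by decide] at m6
  rw [show ({4} ∪ {6, 5} : Finset (Fin 7)) = ({0} ∪ {1, 2, 3})ᶜ by decide] at m4
  have a123 := h.auth _ h123
  have b1 := h.sub {1} {2, 3} (by decide)
  have b2 := h.sub {2} {3} (by decide)
  rw [show ({1} ∪ {2, 3} : Finset (Fin 7)) = {1, 2, 3} by decide] at b1
  rw [show ({2} ∪ {3} : Finset (Fin 7)) = {2, 3} by decide] at b2
  have s0 := h.single 0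
  have s1 := h.single 1
  have s2 := h.single 2
  have s3 := h.single 3
  have c := h.subR {0} {1, 2, 3} (by decide)
  have c2 := h.prodR {0} {1, 2, 3} {2, 3} (by decide) (by decide) (by linarith)
  rw [show ({0} ∪ {2, 3} : Finset (Fin 7)) = {0, 2, 3} by decide] at c2
  have a023 := h.auth _ h023
  have u23 := h.unauth {2, 3} (hsmall _ (by decide))
  have d := h.sub {0} {2, 3} (by decide)
  rw [show ({0} ∪ {2, 3} : Finset (Fin 7)) = {0, 2, 3} by decide] at d
  have := h.pos
  linarith

/-- combinatorial properties of the access structure, permutation invariant -/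
structure AccS (Γ : Finset (Fin 7) → Prop) : Prop where
  mono : Monotonic Γ
  nc : NoCloning Γ
  small : ∀ A : Finset (Fin 7), A.card < 3 → ¬ Γ A
  has3 : ∀ A, Γ A → ∃ B ⊆ A, B.card = 3 ∧ Γ B
  cover : ∀ i, ∃ B : Finset (Fin 7), i ∈ B ∧ B.card = 3 ∧ Γ B

theorem AccS.map {Γ} (h : AccS Γ) (σ : Equiv.Perm (Fin 7)) :
    AccS (fun A => Γ (A.map σ.toEmbedding)) where
  mono A B hA hs := h.mono _ _ hA (Finset.map_subset_map.2 hs)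
  nc A := by beta_reduce; rw [map_compl_perm]; exact h.nc _
  small A hA := h.small _ (by simpa using hA)
  has3 A hA := by
    obtain ⟨B, hB, hc, hG⟩ := h.has3 _ hA
    obtain ⟨C, hC, rfl⟩ := Finset.subset_map_iff.1 hB
    exact ⟨C, hC, by simpa using hc, hG⟩
  cover i := by
    obtain ⟨B, hi, hc, hG⟩ := h.cover (σ i)
    refine ⟨B.map σ.symm.toEmbedding, ?_, by simpa using hc, ?_⟩
    · simpa using hi
    · have : (B.map σ.symm.toEmbedding).map σ.toEmbedding = B := by
        ext x; simp
      rwa [this]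

theorem AccS.meet {Γ} (h : AccS Γ) {A B : Finset (Fin 7)} (hA : Γ A) (hB : Γ B) : ¬ Disjoint A B :=
  fun hd => (h.nc A).1 hA (h.mono _ _ hB (Finset.subset_compl_iff_disjoint_left.2 hd))

/-- for an authorized triple containing `i` there is another meeting it only in `i` -/
theorem AccS.other {Γ} (h : AccS Γ) (A : Finset (Fin 7)) (i : Fin 7) (hi : i ∈ A) (hc : A.card = 3)
    : ∃ B : Finset (Fin 7), B.card = 3 ∧ Γ B ∧ Disjoint B (A.erase i) := by
  have h1 : ¬ Γ (A.erase i) := h.small _ (by rw [Finset.card_erase_of_mem hi, hc]; norm_num)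
  have h2 : Γ (A.erase i)ᶜ := by
    by_contra h'; exact h1 ((h.nc _).2 h')
  obtain ⟨B, hB, hc, hG⟩ := h.has3 _ h2
  exact ⟨B, hc, hG, Finset.subset_compl_iff_disjoint_right.1 hB⟩

theorem step3 {Γ s L} (h : Ent Γ s L) (a : AccS Γ)
    (hun : ∀ B : Finset (Fin 7), B.card = 3 → Γ B → 4 ∈ B → 5 ∉ B)
    (h014 : Γ {0, 1, 4}) (h234 : Γ {2, 3, 4}) (h025 : Γ {0, 2, 5}) (h135 : Γ {1, 3, 5}) : False := by
  -- edges through 6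
  have e6 : ∀ B : Finset (Fin 7), B.card = 3 → Γ B → 6 ∈ B → B = {0, 3, 6} ∨ B = {1, 2, 6} := by
    intro B hc hB h6
    have key : ∀ B : Finset (Fin 7), B.card = 3 → 6 ∈ B → (4 ∈ B → 5 ∉ B) →
      ¬ Disjoint B {0, 1, 4} → ¬ Disjoint B {2, 3, 4} → ¬ Disjoint B {0, 2, 5} →
      ¬ Disjoint B {1, 3, 5} → B = {0, 3, 6} ∨ B = {1, 2, 6} := by decide +kernel
    exact key B hc h6 (hun B hc hB) (a.meet hB h014) (a.meet hB h234) (a.meet hB h025)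
      (a.meet hB h135)
  obtain ⟨h036, h126⟩ : Γ {0, 3, 6} ∧ Γ {1, 2, 6} := by
    obtain ⟨B, h6, hc, hB⟩ := a.cover 6
    obtain ⟨C, hCc, hC, hd⟩ := a.other B 6 h6 hc
    rcases e6 B hc hB h6 with rfl | rfl
    · have h6' : 6 ∈ C := by
        by_contra h6'
        refine a.meet hC hB ?_
        rw [Finset.disjoint_left] at hd ⊢
        intro x hx hx'
        refine hd hx (Finset.mem_erase.2 ⟨?_, hx'⟩)
        rintro rfl; exact h6' hx
      rcases e6 C hCc hC h6' with rfl | rfl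
      · exact absurd hd (by decide)
      · exact ⟨hB, hC⟩
    · have h6' : 6 ∈ C := by
        by_contra h6'
        refine a.meet hC hB ?_
        rw [Finset.disjoint_left] at hd ⊢
        intro x hx hx'
        refine hd hx (Finset.mem_erase.2 ⟨?_, hx'⟩)
        rintro rfl; exact h6' hx
      rcases e6 C hCc hC h6' with rfl | rfl
      · exact ⟨hC, hB⟩
      · exact absurd hd (by decide)
  have tri : ∀ A : Finset (Fin 7), (∀ B ⊆ Aᶜ, B.card = 3 → ¬ ((4 ∈ B → 5 ∉ B) ∧
      ¬ Disjoint B {0, 1, 4} ∧ ¬ Disjoint B {2, 3, 4} ∧ ¬ Disjoint B {0, 2, 5} ∧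
      ¬ Disjoint B {1, 3, 5} ∧ ¬ Disjoint B {0, 3, 6} ∧ ¬ Disjoint B {1, 2, 6})) → Γ A := by
    intro A hA
    by_contra h'
    have : Γ Aᶜ := by by_contra h2; exact h' ((a.nc _).2 h2)
    obtain ⟨B, hB, hc, hG⟩ := a.has3 _ this
    exact hA B hB hc ⟨hun B hc hG, a.meet hG h014, a.meet hG h234, a.meet hG h025, a.meet hG h135,
      a.meet hG h036, a.meet hG h126⟩
  exact no_bad h a.mono a.nc h014 h234 h025 h036 h126 (tri _ (by decide +kernel))
    (tri _ (by decide +kernel)) a.small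

theorem step2 {Γ s L} (h : Ent Γ s L) (a : AccS Γ)
    (hun : ∀ B : Finset (Fin 7), B.card = 3 → Γ B → 4 ∈ B → 5 ∉ B)
    (h014 : Γ {0, 1, 4}) (h234 : Γ {2, 3, 4}) (h025 : Γ {0, 2, 5}) : False := by
  obtain ⟨C, hCc, hC, hd⟩ := a.other {0, 2, 5} 5 (by decide) (by decide)
  have key : ∀ B : Finset (Fin 7), B.card = 3 → (4 ∈ B → 5 ∉ B) →
      ¬ Disjoint B {0, 1, 4} → ¬ Disjoint B {2, 3, 4} → ¬ Disjoint B {0, 2, 5} →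
      Disjoint B (({0, 2, 5} : Finset (Fin 7)).erase 5) → B = {1, 3, 5} := by decide +kernel
  have := key C hCc (hun C hCc hC) (a.meet hC h014) (a.meet hC h234) (a.meet hC h025) hd
  subst this
  exact step3 h a hun h014 h234 h025 hC

set_option synthInstance.maxSize 2000 in
set_option synthInstance.maxHeartbeats 400000 in
theorem step1 {Γ s L} (h : Ent Γ s L) (a : AccS Γ)
    (hun : ∀ B : Finset (Fin 7), B.card = 3 → Γ B → 4 ∈ B → 5 ∉ B)
    (h014 : Γ {0, 1, 4}) (h234 : Γ {2, 3, 4}) : False := by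
  obtain ⟨C, h5, hCc, hC⟩ := a.cover 5
  have key : ∀ B : Finset (Fin 7), B.card = 3 → 5 ∈ B → (4 ∈ B → 5 ∉ B) →
      ¬ Disjoint B {0, 1, 4} → ¬ Disjoint B {2, 3, 4} →
      B = {0, 2, 5} ∨ B = {0, 3, 5} ∨ B = {1, 2, 5} ∨ B = {1, 3, 5} := by decide +kernel
  have go : ∀ σ : Equiv.Perm (Fin 7), σ 4 = 4 → σ 5 = 5 →
      Γ (Finset.map σ.toEmbedding {0, 1, 4}) → Γ (Finset.map σ.toEmbedding {2, 3, 4}) →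
      Γ (Finset.map σ.toEmbedding {0, 2, 5}) → False := by
    intro σ h4 h5 g1 g2 g3
    refine step2 (h.map σ) (a.map σ) ?_ g1 g2 g3
    intro B hc hB h4B h5B
    refine hun _ (by simpa using hc) hB ?_ ?_
    · rw [← h4]; exact Finset.mem_map_of_mem _ h4B
    · rw [← h5]; exact Finset.mem_map_of_mem _ h5B
  rcases key C hCc h5 (hun C hCc hC) (a.meet hC h014) (a.meet hC h234) with rfl | rfl | rfl | rfl
  · exact step2 h a hun h014 h234 hC
  · refine go (Equiv.swap 2 3) (by decide) (by decide) ?_ ?_ ?_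
    · convert h014; try decide
    · convert h234; try decide
    · convert hC; try decide
  · refine go (Equiv.swap 0 1) (by decide) (by decide) ?_ ?_ ?_
    · convert h014; try decide
    · convert h234; try decide
    · convert hC; try decide
  · refine go (Equiv.swap 0 1 * Equiv.swap 2 3) (by decide) (by decide) ?_ ?_ ?_
    · convert h014; try decide
    · convert h234; try decide
    · convert hC; try decide

theorem step0 {Γ s L} (h : Ent Γ s L) (a : AccS Γ) (p q : Fin 7) (hpq : p ≠ q)
    (hun : ∀ B : Finset (Fin 7), B.card = 3 → Γ B → p ∈ B → q ∉ B) : False := by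
  obtain ⟨M, hp, hMc, hM⟩ := a.cover p
  obtain ⟨N, hNc, hN, hd⟩ := a.other M p hp hMc
  have hpN : p ∈ N := by
    by_contra hpN
    refine a.meet hN hM ?_
    rw [Finset.disjoint_left] at hd ⊢
    intro x hx hx'
    refine hd hx (Finset.mem_erase.2 ⟨?_, hx'⟩)
    rintro rfl; exact hpN hx
  have hqM := hun M hMc hM hp
  have hqN := hun N hNc hN hpN
  obtain ⟨x, y, hxy, eM⟩ := Finset.card_eq_two.1
    (show (M.erase p).card = 2 by rw [Finset.card_erase_of_mem hp, hMc])
  obtain ⟨z, w, hzw, eN⟩ := Finset.card_eq_two.1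
    (show (N.erase p).card = 2 by rw [Finset.card_erase_of_mem hpN, hNc])
  have eM' : M = {x, y, p} := by
    rw [← Finset.insert_erase hp, eM]; ext i; simp; tauto
  have eN' : N = {z, w, p} := by
    rw [← Finset.insert_erase hpN, eN]; ext i; simp; tauto
  have hxp : x ≠ p := fun h => by have : x ∈ M.erase p := by rw [eM]; simp
                                  simp [h] at this
  have hyp : y ≠ p := fun h => by have : y ∈ M.erase p := by rw [eM]; simp
                                  simp [h] at this
  have hzp : z ≠ p := fun h => by have : z ∈ N.erase p := by rw [eN]; simp
                                  simp [h] at this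
  have hwp : w ≠ p := fun h => by have : w ∈ N.erase p := by rw [eN]; simp
                                  simp [h] at this
  rw [eM, eN'] at hd
  rw [eM'] at hqM hM
  rw [eN'] at hqN hN
  simp only [Finset.disjoint_left, Finset.mem_insert, Finset.mem_singleton, not_or] at hd hqM hqN
  have hz := hd (Or.inl rfl)
  have hw := hd (Or.inr (Or.inl rfl))
  obtain ⟨v, hv⟩ : ∃ v, v ∉ ({x, y, z, w, p, q} : Finset (Fin 7)) := by
    by_contra hcon
    push Not at hcon
    have h1 : (univ : Finset (Fin 7)) ⊆ {x, y, z, w, p, q} := fun i _ => hcon i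
    have := (Finset.card_le_card h1).trans Finset.card_le_six
    simp at this
  simp only [Finset.mem_insert, Finset.mem_singleton, not_or] at hv
  have hinj : Function.Injective ![x, y, z, w, p, q, v] := by
    intro i j hij
    fin_cases i <;> fin_cases j <;> simp at hij ⊢ <;> grind
  let σ : Equiv.Perm (Fin 7) := Equiv.ofBijective _ (Finite.injective_iff_bijective.1 hinj)
  have e : ∀ i, σ i = ![x, y, z, w, p, q, v] i := fun i => rfl
  refine step1 (h.map σ) (a.map σ) ?_ ?_ ?_
  · intro B hc hB h4 h5
    exact hun _ (by simpa using hc) hB (Finset.mem_map_of_mem σ.toEmbedding h4)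
      (Finset.mem_map_of_mem σ.toEmbedding h5)
  · simpa [e] using hM
  · simpa [e] using hN

theorem posOf_disj (A : Finset (Fin 7)) : (0 : Fin 8) ∉ posOf A := by
  simp [posOf, Fin.succ_ne_zero]

theorem posOf_compl (A : Finset (Fin 7)) : (posOf Aᶜ)ᶜ = insert 0 (posOf A) := by
  ext i
  refine Fin.cases ?_ (fun j => ?_) i
  · simp [posOf, Fin.succ_ne_zero]
  · simp [posOf, Fin.succ_ne_zero]

theorem posOf_disjoint {A B : Finset (Fin 7)} (h : Disjoint A B) : Disjoint (posOf A) (posOf B) :=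
  (Finset.disjoint_image (Fin.succ_injective 7)).2 h

theorem ent_of_qss (Γ : Finset (Fin 7) → Prop) (ψ : (Fin (7 + 1) → Fin 2) → ℂ)
    (hψ : IsPureQSSState Γ ψ) : Ent Γ (fun A => Sent ψ (posOf A)) (Real.log 2) := by
  have hn := hψ.normalized
  have c : ∀ A, Sent ψ (posOf Aᶜ) = Sent ψ (insert 0 (posOf A)) := fun A => by
    rw [S_compl, posOf_compl]
  have cu : Sent ψ (posOf univ) = Sent ψ {0} := by
    have := c ∅
    simpa [posOf] using this
  have pu : ∀ A B : Finset (Fin 7), posOf (A ∪ B) = posOf A ∪ posOf B := fun A B =>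
    Finset.image_union _ _
  have pi : ∀ A B : Finset (Fin 7), insert 0 (posOf A ∪ posOf B) = posOf A ∪ insert 0 (posOf B) := by
    intro A B
    rw [Finset.union_insert]
  have dR : ∀ A B : Finset (Fin 7), Disjoint A B → Disjoint (posOf A) (insert 0 (posOf B)) := by
    intro A B h
    rw [Finset.disjoint_insert_right]
    exact ⟨posOf_disj A, posOf_disjoint h⟩
  refine ⟨Real.log_pos (by norm_num), fun j => ?_, fun A B hd => ?_, fun A B hd => ?_,
    fun A B B' hd hs h => ?_, fun A B B' hd hs h => ?_, fun A hA => ?_, fun A hA => ?_⟩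
  · have := S_single ψ j.succ hn
    simpa [posOf] using this
  · simp only [pu]
    exact S_sub ψ _ _ (posOf_disjoint hd) hn
  · simp only [c, pu, pi]
    exact S_sub ψ _ _ (dR A B hd) hn
  · simp only [pu] at h ⊢
    exact S_mono_prod ψ _ _ _ (posOf_disjoint hd) (Finset.image_subset_image hs) hn h
  · simp only [c, pu, pi] at h ⊢
    exact S_mono_prod ψ _ _ _ (dR A B hd)
      (Finset.insert_subset_insert _ (Finset.image_subset_image hs)) hn h
  · simp only [c, cu]
    exact hψ.recover A hA
  · simp only [c, cu]
    exact hψ.secrecy A hA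

theorem exists_min (Γ : Finset (Fin 7) → Prop) (A : Finset (Fin 7)) (hA : Γ A) :
    ∃ B ⊆ A, IsMinimal Γ B := by
  induction A using Finset.strongInduction with
  | H A ih =>
    by_cases h : ∃ B, B ⊂ A ∧ Γ B
    · obtain ⟨B, hB, hG⟩ := h
      obtain ⟨C, hC, hm⟩ := ih B hB hG
      exact ⟨C, hC.trans hB.1, hm⟩
    · push Not at h
      exact ⟨A, Finset.Subset.refl _, hA, h⟩

theorem stmt19 (Γ : Finset (Fin 7) → Prop)
    (hmono : Monotonic Γ) (hnc : NoCloning Γ) (hnr : NoRedundancy Γ)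
    (hhom : ∀ A : Finset (Fin 7), IsMinimal Γ A → A.card = 3)
    (ψ : (Fin (7 + 1) → Fin 2) → ℂ) (hψ : IsPureQSSState Γ ψ) :
    ∀ P : Finset (Fin 7), P.card = 2 →
      ∃ A : Finset (Fin 7), IsMinimal Γ A ∧ P ⊆ A := by
  intro P hP
  by_contra hcon
  push Not at hcon
  have small : ∀ A : Finset (Fin 7), A.card < 3 → ¬ Γ A := by
    intro A hA hG
    obtain ⟨B, hB, hm⟩ := exists_min Γ A hG
    have := Finset.card_le_card hB
    rw [hhom B hm] at this
    omega
  have a : AccS Γ := by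
    refine ⟨hmono, hnc, small, fun A hA => ?_, fun i => ?_⟩
    · obtain ⟨B, hB, hm⟩ := exists_min Γ A hA
      exact ⟨B, hB, hhom B hm, hm.1⟩
    · obtain ⟨B, hm, hi⟩ := hnr i
      exact ⟨B, hi, hhom B hm, hm.1⟩
  obtain ⟨p, q, hpq, rfl⟩ := Finset.card_eq_two.1 hP
  refine step0 (ent_of_qss Γ ψ hψ) a p q hpq ?_
  intro B hc hB hp hq
  refine hcon B ⟨hB, fun C hC => small C ?_⟩ ?_
  · rw [← hc]; exact Finset.card_lt_card hC
  · intro i hi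
    rcases Finset.mem_insert.1 hi with rfl | hi
    · exact hp
    · rw [Finset.mem_singleton.1 hi]; exact hq
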